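/- Let n ≥ 2 and 1 ≤ k ≤ n−1, and let T be a Cayley tree labelled with [n]_0. Then the set of children of the root of T is exactly {1,…,k} if and only if the word blob(T)(1) blob(T)(2) ⋯ blob(T)(n−1) satisfies 0^{k−1}1^{n−k} ≤ blob(T) ≤ 0^{k−1} k n^{n−k−1} in the lexicographic order on words over the alphabet {0,1,…,n} (equivalently: blob(T)(i) = 0 for i ≤ k−1, 1 ≤ blob(T)(k) ≤ k, and blob(T)(i) ≥ 1 for i ≥ k+1). Consequently, the number of Cayley trees labelled with [n]_0 whose set of children of the root is exactly {1,…,k} equals k·n^{n−k−1}. -/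

import Mathlib

/-!
A vertex whose parent is the root is a record, and the largest proper ancestor of a record is `0`
or a smaller record. Hence a letter `0` in the code stands exactly at a record whose successor
among the records is a child of the root, and the letter at a record `r` is at most `r`. Reading
the code from left to right with these two facts gives the description of the trees whose root
has children `1,…,k` (`IsCayleyTree.children_iff`).

The enumeration uses that the record code is a bijection from trees onto words of length `n - 1`
over `{0,…,n}`. The records of a tree can be recovered from its code `b`, extended by `b 0 = 0` and
`b n = 0`: they are the vertices `i` with `b^[m] i ≤ i` for all `m`
(`IsCayleyTree.isWeakRecord_blob_iff`), so shifting the letters at these positions back by one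
inverts the code (`unblob`). Both directions rest on one principle,
`isWeakRecord_modified_iff`: changing a map `g` only at its weak records `r`, and so that the new
value of `r` has a `g`-orbit bounded by `r`, does not change the set of weak records. The new map
`unblob n b` has no cycle because a weak record is sent to a vertex with strictly lower orbit.
The words in the interval are then counted letter by letter.
-/

open scoped Classical

namespace WearyParking

/-- `f` is the parent function of a Cayley tree on `{0,…,n}` rooted at `0`:
`f 0 = 0`, `f` is pinned to `0` outside `{1,…,n}`, `f` maps `{1,…,n}` into `{0,…,n}`,
and every vertex reaches the root under iteration. -/
def IsCayleyTree (n : ℕ) (f : ℕ → ℕ) : Prop :=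
  f 0 = 0 ∧ (∀ i, n < i → f i = 0) ∧
  (∀ i, 1 ≤ i → i ≤ n → f i ≤ n) ∧
  (∀ i, 1 ≤ i → i ≤ n → ∃ k, f^[k] i = 0)

/-- A non-root vertex `i` is a record of the tree if it is greater than
all of its ancestors. -/
def IsRecord (n : ℕ) (f : ℕ → ℕ) (i : ℕ) : Prop :=
  1 ≤ i ∧ i ≤ n ∧ ∀ k, 1 ≤ k → f^[k] i < i

/-- The smallest record larger than `i`. -/
noncomputable def nextRecord (n : ℕ) (f : ℕ → ℕ) (i : ℕ) : ℕ :=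
  sInf {j | IsRecord n f j ∧ i < j}

/-- The record (blob) code of the tree, a function on `{1,…,n-1}`:
at a non-record position it records the parent, and at a record position it
records the parent of the next record. -/
noncomputable def blob (n : ℕ) (f : ℕ → ℕ) (i : ℕ) : ℕ :=
  if IsRecord n f i then f (nextRecord n f i) else f i

/-- Number of children of vertex `v` in the tree. -/
def numChildren (n : ℕ) (f : ℕ → ℕ) (v : ℕ) : ℕ :=
  ((Finset.Icc 1 n).filter fun i => f i = v).card

/-- The list of the first `i+1` vertices visited by the priority-first search:
start at the root `0`; at each step visit the smallest unvisited vertex whose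
parent has been visited. -/
noncomputable def wearyList (n : ℕ) (f : ℕ → ℕ) : ℕ → List ℕ
  | 0 => [0]
  | (i + 1) =>
      wearyList n f i ++
        [sInf {v | 1 ≤ v ∧ v ≤ n ∧ v ∉ wearyList n f i ∧ f v ∈ wearyList n f i}]

/-- The weary permutation of the tree: `weary n f i` is the `i`-th vertex visited
by the priority-first search (with `weary n f 0 = 0`). -/
noncomputable def weary (n : ℕ) (f : ℕ → ℕ) (i : ℕ) : ℕ :=
  (wearyList n f n).getD i 0

/-- The inverse of the weary permutation. -/
noncomputable def wearyInv (n : ℕ) (f : ℕ → ℕ) (v : ℕ) : ℕ :=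
  sInf {i | weary n f i = v}

/-- The preference sequence `π_T` of the tree: `π_T i = ω_T⁻¹ (f_T i) + 1`. -/
noncomputable def pref (n : ℕ) (f : ℕ → ℕ) (i : ℕ) : ℕ :=
  wearyInv n f (f i) + 1

/-- Parent function of the priority tree `pt(T)`: `ω_T⁻¹ ∘ f_T ∘ ω_T`. -/
noncomputable def prioParent (n : ℕ) (f : ℕ → ℕ) (i : ℕ) : ℕ :=
  wearyInv n f (f (weary n f i))

/-- The list of spots occupied by cars `1,…,c` in the classical parking process:
car `c` parks at the first spot `≥ π c` not occupied by an earlier car. -/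
noncomputable def spotList (π : ℕ → ℕ) : ℕ → List ℕ
  | 0 => []
  | (c + 1) => spotList π c ++ [sInf {s | π (c + 1) ≤ s ∧ s ∉ spotList π c}]

/-- The spot where car `c` ends up in the classical parking process. -/
noncomputable def spot (π : ℕ → ℕ) (c : ℕ) : ℕ :=
  (spotList π c).getD (c - 1) 0

/-- `π` is a parking function of length `n`: preferences lie in `{1,…,n}`
(pinned to `1` outside `{1,…,n}`) and every car parks within the `n` spots. -/
def IsParkingFun (n : ℕ) (π : ℕ → ℕ) : Prop :=
  (∀ c, 1 ≤ c → c ≤ n → 1 ≤ π c ∧ π c ≤ n) ∧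
  (∀ c, c = 0 ∨ n < c → π c = 1) ∧
  (∀ c, 1 ≤ c → c ≤ n → spot π c ≤ n)

/-- The bird's-eye permutation `ω_π`: the car parked at spot `i` (and `0` at `0`). -/
noncomputable def birdsEye (n : ℕ) (π : ℕ → ℕ) (i : ℕ) : ℕ :=
  if i = 0 then 0 else sInf {c | 1 ≤ c ∧ c ≤ n ∧ spot π c = i}

/-- The inverse of the bird's-eye permutation. -/
noncomputable def birdsEyeInv (n : ℕ) (π : ℕ → ℕ) (c : ℕ) : ℕ :=
  sInf {i | birdsEye n π i = c}

/-- Parent function of the parking tree `PT(π)`: `f_π i = ω_π (π i - 1)`. -/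
noncomputable def ptParent (n : ℕ) (π : ℕ → ℕ) (i : ℕ) : ℕ :=
  if 1 ≤ i ∧ i ≤ n then birdsEye n π (π i - 1) else 0

/-- `v` is a record of the parking function `π`, i.e. a left-to-right maximum of
the word `ω_π(1) ω_π(2) ⋯ ω_π(n)`. -/
def IsPfRecord (n : ℕ) (π : ℕ → ℕ) (v : ℕ) : Prop :=
  ∃ i, 1 ≤ i ∧ i ≤ n ∧ birdsEye n π i = v ∧ ∀ j, 1 ≤ j → j < i → birdsEye n π j < v

/-- The waiting time of the tree: `wait T = Σ_{i=1}^n (i - f_{pt(T)}(i))`. -/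
noncomputable def wait (n : ℕ) (f : ℕ → ℕ) : ℕ :=
  ∑ i ∈ Finset.Icc 1 n, (i - prioParent n f i)

/-- The number of priority small ascents of the tree. -/
noncomputable def psa (n : ℕ) (f : ℕ → ℕ) : ℕ :=
  ((Finset.Icc 1 n).filter fun i => prioParent n f i = i - 1).card

/-- The number of children of the root. -/
def degRoot (n : ℕ) (f : ℕ → ℕ) : ℕ := numChildren n f 0

/-- The children sequence: `chseq n f j` is the number of vertices with exactly
`j` children. -/
def chseq (n : ℕ) (f : ℕ → ℕ) (j : ℕ) : ℕ :=
  ((Finset.Icc 0 n).filter fun v => numChildren n f v = j).card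

/-- The number of probes of the parking function: `n` plus the total displacement. -/
noncomputable def probes (n : ℕ) (π : ℕ → ℕ) : ℕ :=
  n + ∑ c ∈ Finset.Icc 1 n, (spot π c - π c)

/-- The number of lucky cars of `π`: cars parking at their preferred spot. -/
noncomputable def lucky (n : ℕ) (π : ℕ → ℕ) : ℕ :=
  ((Finset.Icc 1 n).filter fun c => spot π c = π c).card

/-- The number of `1`s in `π`. -/
def ones (n : ℕ) (π : ℕ → ℕ) : ℕ :=
  ((Finset.Icc 1 n).filter fun c => π c = 1).card

/-- The multiplicity of the value `v` in the parking function `π`. -/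
def multIn (n : ℕ) (π : ℕ → ℕ) (v : ℕ) : ℕ :=
  ((Finset.Icc 1 n).filter fun c => π c = v).card

/-- The multiplicity sequence: `multSeq n π j` is the number of values in
`{1,…,n+1}` appearing exactly `j` times in `π`. -/
def multSeq (n : ℕ) (π : ℕ → ℕ) (j : ℕ) : ℕ :=
  ((Finset.Icc 1 (n + 1)).filter fun v => multIn n π v = j).card

/-- The tree is a path graph with endpoints `0` and `n`: every vertex has at most
one child and `n` is the (unique) leaf. -/
def IsPathTree (n : ℕ) (f : ℕ → ℕ) : Prop :=
  (∀ v, v ≤ n → numChildren n f v ≤ 1) ∧ numChildren n f n = 0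

/-- `g` is the parent map of a rooted forest on `{1,…,n}` rooted at `{1,…,k}`:
the vertices `1,…,k` are roots (fixed points), every other vertex of `{1,…,n}` has a
parent in `{1,…,n}`, every vertex reaches one of the roots under iteration, and `g`
is pinned to `0` outside `{1,…,n}`. -/
def IsForestRootedAt (n k : ℕ) (g : ℕ → ℕ) : Prop :=
  (∀ i, 1 ≤ i → i ≤ k → g i = i) ∧
  (∀ i, k < i → i ≤ n → 1 ≤ g i ∧ g i ≤ n) ∧
  (∀ i, 1 ≤ i → i ≤ n → ∃ m, 1 ≤ g^[m] i ∧ g^[m] i ≤ k) ∧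
  (∀ i, i = 0 ∨ n < i → g i = 0)

/-! ### Weak records of a self-map -/

/-- `i ∈ {1,…,n}` is a weak record of `g` if no iterate of `g` takes `i` above itself. For the
parent function of a tree these are the records; unlike `IsRecord`, the notion also makes sense
for a code, whose functional graph may contain cycles. -/
def IsWeakRecord (n : ℕ) (g : ℕ → ℕ) (i : ℕ) : Prop :=
  1 ≤ i ∧ i ≤ n ∧ ∀ k, g^[k] i ≤ i

theorem exists_orbit_max {n : ℕ} {g : ℕ → ℕ} (hg : ∀ v, g v ≤ n) (v : ℕ) :
    ∃ t, ∀ s, g^[s] v ≤ g^[t] v := by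
  have hb : BddAbove (Set.range fun s => g^[s] v) := by
    refine ⟨max v n, ?_⟩
    rintro _ ⟨s, rfl⟩
    cases s with
    | zero => simp
    | succ s =>
      simp only [Function.iterate_succ_apply']
      exact (hg _).trans (le_max_right _ _)
  obtain ⟨t, ht⟩ := Nat.sSup_mem (Set.range_nonempty fun s => g^[s] v) hb
  refine ⟨t, fun s => ?_⟩
  have := le_csSup hb (Set.mem_range_self s)
  simp only at ht this
  omega

theorem isWeakRecord_orbit_max {n : ℕ} {g : ℕ → ℕ} {v t : ℕ}
    (ht : ∀ s, g^[s] v ≤ g^[t] v) (h1 : 1 ≤ g^[t] v) (hn : g^[t] v ≤ n) :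
    IsWeakRecord n g (g^[t] v) := by
  refine ⟨h1, hn, fun k => ?_⟩
  rw [← Function.iterate_add_apply]
  exact ht _

/-- The first weak record on the orbit of a vertex that is not one is the maximum of the orbit,
hence lies strictly above the vertex. -/
theorem exists_first_weakRecord {n : ℕ} {g : ℕ → ℕ} (hg : ∀ v, g v ≤ n) {v : ℕ}
    (h1 : 1 ≤ v) (hn : v ≤ n) (hv : ¬ IsWeakRecord n g v) :
    ∃ t, v < g^[t] v ∧ ∀ s < t, ¬ IsWeakRecord n g (g^[s] v) := by
  obtain ⟨t₀, ht₀⟩ := exists_orbit_max hg v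
  have hle : g^[t₀] v ≤ n := by
    cases t₀ with
    | zero => simpa using hn
    | succ s => rw [Function.iterate_succ_apply']; exact hg _
  have hex : ∃ t, IsWeakRecord n g (g^[t] v) :=
    ⟨t₀, isWeakRecord_orbit_max ht₀ (h1.trans (ht₀ 0)) hle⟩
  classical
  refine ⟨Nat.find hex, ?_, fun s hs => Nat.find_min hex hs⟩
  have hr := Nat.find_spec hex
  have hfind : Nat.find hex ≤ t₀ :=
    Nat.find_min' hex (isWeakRecord_orbit_max ht₀ (h1.trans (ht₀ 0)) hle)
  have h2 := hr.2.2 (t₀ - Nat.find hex)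
  rw [← Function.iterate_add_apply, Nat.sub_add_cancel hfind] at h2
  have h3 : v ≤ g^[t₀] v := ht₀ 0
  have h4 : v ≠ g^[Nat.find hex] v := fun h => hv (by rw [h]; exact hr)
  omega

/-- If `h` agrees with `g` off the weak records of `g` and sends each weak record `r` to a vertex
whose `g`-orbit stays below `r`, then every vertex whose `g`-orbit is bounded by some `r` has its
`h`-orbit bounded by `r` as well. -/
theorem iterate_le_of_modified {n : ℕ} {g h : ℕ → ℕ}
    (hoff : ∀ v, ¬ IsWeakRecord n g v → h v = g v)
    (hon : ∀ v, IsWeakRecord n g v → ∀ k, g^[k] (h v) ≤ v) {r v : ℕ}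
    (hv : ∀ k, g^[k] v ≤ r) (k : ℕ) : h^[k] v ≤ r := by
  induction k generalizing v with
  | zero => exact hv 0
  | succ k ih =>
    rw [Function.iterate_succ_apply]
    apply ih
    intro j
    by_cases hr : IsWeakRecord n g v
    · exact (hon v hr j).trans (hv 0)
    · rw [hoff v hr, ← Function.iterate_succ_apply]
      exact hv _

/-- A modification of `g` at its weak records as in `iterate_le_of_modified` has the same weak
records as `g`. -/
theorem isWeakRecord_modified_iff {n : ℕ} {g h : ℕ → ℕ} (hg : ∀ v, g v ≤ n)
    (hoff : ∀ v, ¬ IsWeakRecord n g v → h v = g v)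
    (hon : ∀ v, IsWeakRecord n g v → ∀ k, g^[k] (h v) ≤ v) (i : ℕ) :
    IsWeakRecord n h i ↔ IsWeakRecord n g i := by
  constructor
  · intro hi
    by_contra hne
    obtain ⟨t, hlt, hmin⟩ := exists_first_weakRecord hg hi.1 hi.2.1 hne
    have heq : ∀ s ≤ t, h^[s] i = g^[s] i := by
      intro s
      induction s with
      | zero => simp
      | succ s ih =>
        intro hs
        rw [Function.iterate_succ_apply', Function.iterate_succ_apply', ih (by omega),
          hoff _ (hmin s (by omega))]
    have := hi.2.2 t
    rw [heq t le_rfl] at this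
    omega
  · intro hi
    exact ⟨hi.1, hi.2.1, iterate_le_of_modified hoff hon hi.2.2⟩

/-! ### Successor and predecessor within a set of natural numbers -/

theorem pred_spec {P : ℕ → Prop} {i : ℕ} (hi : P i) (hex : ∃ j, P j ∧ j < i) :
    P (sSup {j | P j ∧ j < i}) ∧ sSup {j | P j ∧ j < i} < i ∧
      sInf {j | P j ∧ sSup {j | P j ∧ j < i} < j} = i := by
  have hb : BddAbove {j | P j ∧ j < i} := ⟨i, fun j hj => hj.2.le⟩
  have hm := Nat.sSup_mem (s := {j | P j ∧ j < i}) hex hb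
  have hmax : ∀ j, P j → j < i → j ≤ sSup {j | P j ∧ j < i} :=
    fun j h1 h2 => le_csSup hb ⟨h1, h2⟩
  generalize sSup {j | P j ∧ j < i} = p at hm hmax
  refine ⟨hm.1, hm.2, le_antisymm (Nat.sInf_le ⟨hi, hm.2⟩) ?_⟩
  obtain ⟨h1, h2⟩ := Nat.sInf_mem (s := {j | P j ∧ p < j}) ⟨i, hi, hm.2⟩
  by_contra hlt
  have := hmax _ h1 (by omega)
  omega

theorem succ_spec {P : ℕ → Prop} {i : ℕ} (hi : P i) (hex : ∃ j, P j ∧ i < j) :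
    P (sInf {j | P j ∧ i < j}) ∧ i < sInf {j | P j ∧ i < j} ∧
      sSup {l | P l ∧ l < sInf {j | P j ∧ i < j}} = i := by
  have hm := Nat.sInf_mem (s := {j | P j ∧ i < j}) hex
  have hmin : ∀ j, P j → i < j → sInf {j | P j ∧ i < j} ≤ j :=
    fun j h1 h2 => Nat.sInf_le ⟨h1, h2⟩
  generalize sInf {j | P j ∧ i < j} = p at hm hmin
  have hb : BddAbove {l | P l ∧ l < p} := ⟨p, fun j hj => hj.2.le⟩
  refine ⟨hm.1, hm.2, le_antisymm ?_ (le_csSup hb ⟨hi, hm.2⟩)⟩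
  obtain ⟨h1, h2⟩ := Nat.sSup_mem (s := {l | P l ∧ l < p}) ⟨i, hi, hm.2⟩ hb
  by_contra hlt
  have := hmin _ h1 (by omega)
  omega

/-! ### The record code of a tree -/

theorem IsCayleyTree.le {n : ℕ} {f : ℕ → ℕ} (hf : IsCayleyTree n f) (v : ℕ) : f v ≤ n := by
  obtain ⟨h0, hout, hle, -⟩ := hf
  by_cases h1 : 1 ≤ v
  · by_cases h2 : v ≤ n
    · exact hle v h1 h2
    · simp [hout v (by omega)]
  · obtain rfl : v = 0 := by omega
    simp [h0]

theorem IsCayleyTree.isRecord_iff {n : ℕ} {f : ℕ → ℕ} (hf : IsCayleyTree n f) (i : ℕ) :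
    IsRecord n f i ↔ IsWeakRecord n f i := by
  constructor
  · rintro ⟨h1, hn, h⟩
    refine ⟨h1, hn, fun k => ?_⟩
    rcases Nat.eq_zero_or_pos k with rfl | hk
    · simp
    · exact (h k hk).le
  · rintro ⟨h1, hn, h⟩
    refine ⟨h1, hn, fun k hk => lt_of_le_of_ne (h k) fun heq => ?_⟩
    -- A vertex on a cycle would never reach the root.
    obtain ⟨m, hm⟩ := hf.2.2.2 i h1 hn
    have h3 : f^[k * m] i = i := by
      rw [Function.iterate_mul]
      exact Function.iterate_fixed heq m
    have h4 : m ≤ k * m := Nat.le_mul_of_pos_left m hk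
    rw [← Nat.sub_add_cancel h4, Function.iterate_add_apply, hm,
      Function.iterate_fixed hf.1] at h3
    omega

theorem IsCayleyTree.isRecord_of_parent_zero {n : ℕ} {f : ℕ → ℕ} (hf : IsCayleyTree n f) {i : ℕ}
    (h1 : 1 ≤ i) (hn : i ≤ n) (hi : f i = 0) : IsRecord n f i := by
  refine ⟨h1, hn, fun k hk => ?_⟩
  obtain ⟨k, rfl⟩ : ∃ j, k = j + 1 := ⟨k - 1, by omega⟩
  rw [Function.iterate_succ_apply, hi, Function.iterate_fixed hf.1]
  omega

theorem IsCayleyTree.isRecord_top {n : ℕ} {f : ℕ → ℕ} (hf : IsCayleyTree n f) (hn : 1 ≤ n) :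
    IsRecord n f n := by
  refine (hf.isRecord_iff n).2 ⟨hn, le_rfl, fun k => ?_⟩
  cases k with
  | zero => simp
  | succ k => rw [Function.iterate_succ_apply']; exact hf.le _

/-- If `p` bounds the records smaller than a record `r`, it bounds all proper ancestors of `r`:
the largest of them is `0` or again a record. -/
theorem IsCayleyTree.ancestor_le {n : ℕ} {f : ℕ → ℕ} (hf : IsCayleyTree n f) {r p : ℕ}
    (hr : IsRecord n f r) (hp : ∀ j, IsRecord n f j → j < r → j ≤ p) (k : ℕ) :
    f^[k] (f r) ≤ p := by
  obtain ⟨t, ht⟩ := exists_orbit_max hf.le (f r)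
  have hlt : f^[t] (f r) < r := by
    rw [← Function.iterate_succ_apply]
    exact hr.2.2 _ (by omega)
  rcases Nat.eq_zero_or_pos (f^[t] (f r)) with h0 | h0
  · have := ht k
    omega
  · have hn := hr.2.1
    have hM := (hf.isRecord_iff _).2 (isWeakRecord_orbit_max ht h0 (by omega : _ ≤ n))
    exact (ht k).trans (hp _ hM hlt)

theorem nextRecord_top {n : ℕ} {f : ℕ → ℕ} {i : ℕ} (hi : n ≤ i) : nextRecord n f i = 0 := by
  have : {j | IsRecord n f j ∧ i < j} = ∅ := by
    ext j
    simp only [Set.mem_ofPred_eq, Set.mem_empty_iff_false, iff_false]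
    rintro ⟨h, h'⟩
    have := h.2.1
    omega
  rw [nextRecord, this, Nat.sInf_empty]

theorem IsCayleyTree.nextRecord_spec {n : ℕ} {f : ℕ → ℕ} (hf : IsCayleyTree n f) {i : ℕ}
    (hi : i < n) : IsRecord n f (nextRecord n f i) ∧ i < nextRecord n f i ∧
      ∀ j, IsRecord n f j → j < nextRecord n f i → j ≤ i := by
  have hm := Nat.sInf_mem (s := {j | IsRecord n f j ∧ i < j})
    ⟨n, hf.isRecord_top (by omega), hi⟩
  refine ⟨hm.1, hm.2, fun j hj hlt => ?_⟩
  by_contra hc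
  exact absurd (Nat.sInf_le (s := {j | IsRecord n f j ∧ i < j}) ⟨hj, by omega⟩)
    (not_le.2 hlt)

/-- The letter at a record `r` and all its ancestors are at most `r`. -/
theorem IsCayleyTree.iterate_blob_le {n : ℕ} {f : ℕ → ℕ} (hf : IsCayleyTree n f) {r : ℕ}
    (hr : IsRecord n f r) (k : ℕ) : f^[k] (blob n f r) ≤ r := by
  rw [blob, if_pos hr]
  rcases Nat.lt_or_ge r n with h | h
  · obtain ⟨h1, -, h3⟩ := hf.nextRecord_spec h
    exact hf.ancestor_le h1 h3 k
  · rw [nextRecord_top h, hf.1, Function.iterate_fixed hf.1]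
    omega

theorem IsCayleyTree.isWeakRecord_blob_iff {n : ℕ} {f : ℕ → ℕ} (hf : IsCayleyTree n f) (i : ℕ) :
    IsWeakRecord n (blob n f) i ↔ IsRecord n f i := by
  rw [hf.isRecord_iff]
  refine isWeakRecord_modified_iff hf.le (fun v hv => ?_) (fun v hv k => ?_) i
  · rw [← hf.isRecord_iff] at hv
    rw [blob, if_neg hv]
  · exact hf.iterate_blob_le ((hf.isRecord_iff v).2 hv) k

/-! ### The record code is a bijection -/

/-- The words of length `n - 1` over `{0,…,n}`, as functions on `ℕ` extended by `0`. -/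
def IsCode (n : ℕ) (b : ℕ → ℕ) : Prop :=
  b 0 = 0 ∧ (∀ i, n ≤ i → b i = 0) ∧ ∀ i, b i ≤ n

/-- The inverse of the record code: each weak record receives as its parent the letter at the
preceding weak record. The smallest weak record receives `b 0 = 0`, since the supremum of the
empty set is `0`. -/
noncomputable def unblob (n : ℕ) (b : ℕ → ℕ) (i : ℕ) : ℕ :=
  if IsWeakRecord n b i then b (sSup {j | IsWeakRecord n b j ∧ j < i}) else b i

theorem IsCayleyTree.isCode_blob {n : ℕ} {f : ℕ → ℕ} (hf : IsCayleyTree n f) :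
    IsCode n (blob n f) := by
  refine ⟨?_, fun i hi => ?_, fun i => ?_⟩
  · rw [blob, if_neg (fun h => by have := h.1; omega), hf.1]
  · rw [blob]
    split_ifs with h
    · rw [nextRecord_top hi, hf.1]
    · rcases hi.eq_or_lt with rfl | hlt
      · rcases Nat.eq_zero_or_pos n with rfl | hn
        · exact hf.1
        · exact absurd (hf.isRecord_top hn) h
      · exact hf.2.1 i hlt
  · rw [blob]
    split_ifs <;> exact hf.le _

theorem IsCode.iterate_unblob_le {n : ℕ} {b : ℕ → ℕ} (hb : IsCode n b) {r : ℕ}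
    (hr : IsWeakRecord n b r) (k : ℕ) : b^[k] (unblob n b r) ≤ r - 1 := by
  rw [unblob, if_pos hr]
  by_cases hex : ∃ j, IsWeakRecord n b j ∧ j < r
  · obtain ⟨h1, h2, -⟩ := pred_spec hr hex
    have := h1.2.2 (k + 1)
    rw [Function.iterate_succ_apply] at this
    omega
  · have : {j | IsWeakRecord n b j ∧ j < r} = ∅ := by
      ext j
      simpa using fun h => not_lt.1 fun h' => hex ⟨j, h, h'⟩
    rw [this, csSup_empty, bot_eq_zero, hb.1, Function.iterate_fixed hb.1]
    omega

theorem unblob_off {n : ℕ} {b : ℕ → ℕ} {v : ℕ} (hv : ¬ IsWeakRecord n b v) :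
    unblob n b v = b v := if_neg hv

theorem IsCode.isWeakRecord_unblob_iff {n : ℕ} {b : ℕ → ℕ} (hb : IsCode n b) (i : ℕ) :
    IsWeakRecord n (unblob n b) i ↔ IsWeakRecord n b i :=
  isWeakRecord_modified_iff hb.2.2 (fun _ => unblob_off)
    (fun v hv k => (hb.iterate_unblob_le hv k).trans (Nat.sub_le v 1)) i

theorem IsCode.isCayleyTree_unblob {n : ℕ} {b : ℕ → ℕ} (hb : IsCode n b) :
    IsCayleyTree n (unblob n b) := by
  have hle : ∀ v, unblob n b v ≤ n := fun v => by
    rw [unblob]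
    split_ifs <;> exact hb.2.2 _
  -- Induction on a bound for the orbit: past its maximum, the orbit is strictly lower.
  have hreach : ∀ r v, v ≤ n → (∀ k, (unblob n b)^[k] v ≤ r) →
      ∃ k, (unblob n b)^[k] v = 0 := by
    intro r
    induction r with
    | zero => exact fun v _ h => ⟨0, Nat.le_zero.1 (h 0)⟩
    | succ r ih =>
      intro v hvn h
      obtain ⟨t, ht⟩ := exists_orbit_max hle v
      rcases Nat.eq_zero_or_pos ((unblob n b)^[t] v) with h0 | h0
      · exact ⟨t, h0⟩
      have hMn : (unblob n b)^[t] v ≤ n := by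
        cases t with
        | zero => simpa using hvn
        | succ s => rw [Function.iterate_succ_apply']; exact hle _
      have hM := (hb.isWeakRecord_unblob_iff _).1 (isWeakRecord_orbit_max ht h0 hMn)
      obtain ⟨k, hk⟩ := ih (unblob n b ((unblob n b)^[t] v)) (hle _) (fun k => by
        have h1 := iterate_le_of_modified (fun _ => unblob_off)
          (fun v hv k => (hb.iterate_unblob_le hv k).trans (Nat.sub_le v 1))
          (hb.iterate_unblob_le hM) k
        have h2 := h t
        omega)
      refine ⟨k + (t + 1), ?_⟩
      rw [Function.iterate_add_apply, Function.iterate_succ_apply', hk]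
  refine ⟨?_, fun i hi => ?_, fun i _ _ => hle i, fun i h1 hn => ?_⟩
  · rw [unblob_off (fun h => by have := h.1; omega), hb.1]
  · rw [unblob_off (fun h => by have := h.2.1; omega), hb.2.1 i hi.le]
  · refine hreach n i hn fun k => ?_
    cases k with
    | zero => simpa using hn
    | succ k => rw [Function.iterate_succ_apply']; exact hle _

theorem IsCayleyTree.unblob_blob {n : ℕ} {f : ℕ → ℕ} (hf : IsCayleyTree n f) :
    unblob n (blob n f) = f := by
  funext i
  simp only [unblob, hf.isWeakRecord_blob_iff]
  by_cases hi : IsRecord n f i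
  · rw [if_pos hi]
    by_cases hex : ∃ j, IsRecord n f j ∧ j < i
    · obtain ⟨h1, -, h3⟩ := pred_spec hi hex
      rw [blob, if_pos h1, nextRecord, h3]
    · have : {j | IsRecord n f j ∧ j < i} = ∅ := by
        ext j
        simpa using fun h => not_lt.1 fun h' => hex ⟨j, h, h'⟩
      rw [this, csSup_empty, bot_eq_zero, hf.isCode_blob.1]
      exact (Nat.le_zero.1 (hf.ancestor_le hi (fun j h h' => absurd ⟨j, h, h'⟩ hex) 0)).symm
  · rw [if_neg hi, blob, if_neg hi]

theorem IsCode.blob_unblob {n : ℕ} {b : ℕ → ℕ} (hb : IsCode n b) :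
    blob n (unblob n b) = b := by
  have hf := hb.isCayleyTree_unblob
  funext i
  simp only [blob, nextRecord, hf.isRecord_iff, hb.isWeakRecord_unblob_iff]
  by_cases hi : IsWeakRecord n b i
  · rw [if_pos hi]
    rcases Nat.lt_or_ge i n with h | h
    · have htop : IsWeakRecord n b n := by
        rw [← hb.isWeakRecord_unblob_iff, ← hf.isRecord_iff]
        exact hf.isRecord_top (by omega)
      obtain ⟨h1, -, h3⟩ := succ_spec hi ⟨n, htop, h⟩
      rw [unblob, if_pos h1, h3]
    · have := nextRecord_top (f := unblob n b) h
      simp only [nextRecord, hf.isRecord_iff, hb.isWeakRecord_unblob_iff] at this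
      rw [this, hf.1, hb.2.1 i h]
  · rw [if_neg hi, unblob_off hi]

/-! ### Children of the root, read off from the code -/

theorem IsCayleyTree.children_iff {n k : ℕ} (hk1 : 1 ≤ k) (hkn : k ≤ n - 1)
    {f : ℕ → ℕ} (hf : IsCayleyTree n f) :
    (∀ i, 1 ≤ i → i ≤ n → (f i = 0 ↔ i ≤ k)) ↔
      ((∀ i, 1 ≤ i → i ≤ k - 1 → blob n f i = 0) ∧
        (1 ≤ blob n f k ∧ blob n f k ≤ k) ∧
        (∀ i, k + 1 ≤ i → i ≤ n - 1 → 1 ≤ blob n f i)) := by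
  constructor
  · intro h
    have hrec : ∀ i, 1 ≤ i → i ≤ k → IsRecord n f i := fun i h1 h2 =>
      hf.isRecord_of_parent_zero h1 (by omega) ((h i h1 (by omega)).2 h2)
    have hpos : ∀ i, k ≤ i → i ≤ n - 1 → 1 ≤ blob n f i := by
      intro i h1 h2
      rw [Nat.one_le_iff_ne_zero, blob]
      split_ifs with hi
      · obtain ⟨h3, h4, -⟩ := hf.nextRecord_spec (i := i) (by omega)
        rw [ne_eq, h _ h3.1 h3.2.1]
        omega
      · have : i ≠ k := fun hik => hi (hrec i (by omega) (by omega))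
        rw [ne_eq, h i (by omega) (by omega)]
        omega
    refine ⟨fun i h1 h2 => ?_, ⟨hpos k le_rfl hkn, hf.iterate_blob_le (hrec k hk1 le_rfl) 0⟩,
      fun i h1 h2 => hpos i (by omega) h2⟩
    obtain ⟨h3, h4, h5⟩ := hf.nextRecord_spec (i := i) (by omega)
    have hnext : nextRecord n f i ≤ i + 1 := by
      by_contra hc
      have := h5 (i + 1) (hrec _ (by omega) (by omega)) (by omega)
      omega
    rw [blob, if_pos (hrec i h1 (by omega)), h _ h3.1 h3.2.1]
    omega
  · rintro ⟨hlow, ⟨hk, hk'⟩, hhigh⟩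
    -- A zero letter can only stand at a record, and the next record is a child of the root.
    have hrec : ∀ i, 1 ≤ i → i ≤ k - 1 → IsRecord n f i := by
      intro i h1 h2
      by_contra hi
      have := hlow i h1 h2
      rw [blob, if_neg hi] at this
      exact hi (hf.isRecord_of_parent_zero h1 (by omega) this)
    have hstep : ∀ i, 1 ≤ i → i ≤ k - 1 → IsRecord n f (i + 1) → f (i + 1) = 0 := by
      intro i h1 h2 h3
      have h4 := hlow i h1 h2
      obtain ⟨-, h6, h7⟩ := hf.nextRecord_spec (i := i) (by omega)
      have : nextRecord n f i = i + 1 := by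
        by_contra hc
        have := h7 (i + 1) h3 (by omega)
        omega
      rwa [blob, if_pos (hrec i h1 h2), this] at h4
    have hzero : ∀ i, 1 ≤ i → i ≤ k → IsRecord n f i → f i = 0 := by
      intro i h1 h2 h3
      obtain rfl | h4 : i = 1 ∨ 2 ≤ i := by omega
      · have := h3.2.2 1 le_rfl
        simpa using this
      · have := hstep (i - 1) (by omega) (by omega)
        rw [Nat.sub_add_cancel h1] at this
        exact this h3
    -- Otherwise the letter at `k` is its parent, which is smaller than `k` and hence a child of
    -- the root; but then `k` is a record.
    have hreck : IsRecord n f k := by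
      by_contra hc
      rw [blob, if_neg hc] at hk hk'
      have hlt : f k < k := by
        refine lt_of_le_of_ne hk' fun heq => ?_
        obtain ⟨m, hm⟩ := hf.2.2.2 k hk1 (by omega)
        rw [Function.iterate_fixed heq] at hm
        omega
      have hff : f (f k) = 0 :=
        hzero (f k) hk hlt.le (hrec (f k) hk (by omega))
      refine hc ⟨hk1, by omega, fun j hj => ?_⟩
      obtain ⟨j, rfl⟩ : ∃ l, j = l + 1 := ⟨j - 1, by omega⟩
      rw [Function.iterate_succ_apply]
      cases j with
      | zero => simpa using hlt
      | succ j =>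
        rw [Function.iterate_succ_apply, hff, Function.iterate_fixed hf.1]
        omega
    intro i h1 hn
    constructor
    · intro hi
      by_contra hc
      have hir := hf.isRecord_of_parent_zero h1 hn hi
      obtain ⟨h2, h3, h4⟩ := pred_spec hir ⟨k, hreck, by omega⟩
      have h5 : k ≤ sSup {j | IsRecord n f j ∧ j < i} :=
        le_csSup ⟨i, fun j hj => hj.2.le⟩ ⟨hreck, by omega⟩
      generalize sSup {j | IsRecord n f j ∧ j < i} = p at h2 h3 h4 h5
      have h6 : blob n f p = 0 := by
        rw [blob, if_pos h2, nextRecord, h4, hi]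
      rcases h5.eq_or_lt with rfl | h7
      · omega
      · have := hhigh p (by omega) (by omega)
        omega
    · intro hik
      refine hzero i h1 hik ?_
      rcases hik.eq_or_lt with rfl | h
      · exact hreck
      · exact hrec i h1 (by omega)

/-! ### Counting -/

/-- The letters allowed at position `i < n` in codes between `0^{k-1}1^{n-k}` and
`0^{k-1}k n^{n-k-1}`; the additional position `0` always carries `0`. -/
def letters (n k i : ℕ) : Finset ℕ :=
  if i < k then {0} else if i = k then Finset.Icc 1 k else Finset.Icc 1 n

theorem prod_card_letters {n k : ℕ} (hkn : k < n) :
    ∏ i ∈ Finset.range n, (letters n k i).card = k * n ^ (n - k - 1) := by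
  obtain ⟨m, rfl⟩ : ∃ m, n = k + 1 + m := ⟨n - k - 1, by omega⟩
  rw [Finset.prod_range_add, Finset.prod_range_succ, Finset.prod_eq_one]
  · have : ∀ x, (letters (k + 1 + m) k (k + 1 + x)).card = k + 1 + m := fun x => by
      rw [letters, if_neg (by omega), if_neg (by omega)]
      simp
    simp only [this, Finset.prod_const, Finset.card_range]
    rw [show k + 1 + m - k - 1 = m by omega]
    simp [letters]
  · intro i hi
    simp [letters, Finset.mem_range.1 hi]

theorem ncard_codes {n k : ℕ} (hkn : k < n) :
    Set.ncard {b : ℕ → ℕ | (∀ i < n, b i ∈ letters n k i) ∧ ∀ i, n ≤ i → b i = 0} =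
      k * n ^ (n - k - 1) := by
  rw [← prod_card_letters hkn, Finset.prod_range, ← Fintype.card_piFinset,
    ← Set.ncard_coe_finset]
  refine Set.ncard_congr (fun b _ i => b i) ?_ ?_ ?_
  · rintro b ⟨h1, -⟩
    simpa using fun i : Fin n => h1 i i.2
  · rintro b c ⟨-, hb⟩ ⟨-, hc⟩ h
    funext i
    rcases Nat.lt_or_ge i n with hi | hi
    · exact congrFun h ⟨i, hi⟩
    · rw [hb i hi, hc i hi]
  · intro c hc
    refine ⟨fun i => if h : i < n then c ⟨i, h⟩ else 0, ⟨fun i hi => ?_, fun i hi => ?_⟩, ?_⟩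
    · simp only [hi, dite_true]
      simpa using Fintype.mem_piFinset.1 (Finset.mem_coe.1 hc) ⟨i, hi⟩
    · simp [not_lt.2 hi]
    · funext i
      simp

theorem ncard_trees {n k : ℕ} (hk1 : 1 ≤ k) (hkn : k ≤ n - 1) :
    Set.ncard {f : ℕ → ℕ | IsCayleyTree n f ∧
        ∀ i, 1 ≤ i → i ≤ n → (f i = 0 ↔ i ≤ k)} = k * n ^ (n - k - 1) := by
  rw [← ncard_codes (n := n) (k := k) (by omega)]
  refine Set.ncard_congr (fun f _ => blob n f) ?_ ?_ ?_
  · rintro f ⟨hf, h⟩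
    obtain ⟨h1, h2, h3⟩ := (hf.children_iff hk1 hkn).1 h
    obtain ⟨hb0, hbn, hble⟩ := hf.isCode_blob
    refine ⟨fun i hi => ?_, hbn⟩
    rw [letters]
    split_ifs with ha hb
    · rw [Finset.mem_singleton]
      rcases Nat.eq_zero_or_pos i with rfl | hi0
      · exact hb0
      · exact h1 i hi0 (by omega)
    · subst hb
      exact Finset.mem_Icc.2 h2
    · exact Finset.mem_Icc.2 ⟨h3 i (by omega) (by omega), hble i⟩
  · rintro f g ⟨hf, -⟩ ⟨hg, -⟩ h
    rw [← hf.unblob_blob, ← hg.unblob_blob, h]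
  · rintro b ⟨h1, h2⟩
    have hlow : ∀ i < k, b i = 0 := fun i hi => by
      have := h1 i (by omega)
      rwa [letters, if_pos hi, Finset.mem_singleton] at this
    have hmid : 1 ≤ b k ∧ b k ≤ k := by
      have := h1 k (by omega)
      rwa [letters, if_neg (by omega), if_pos rfl, Finset.mem_Icc] at this
    have hhigh : ∀ i, k < i → i < n → 1 ≤ b i ∧ b i ≤ n := fun i hi hi' => by
      have := h1 i hi'
      rwa [letters, if_neg (by omega), if_neg (by omega), Finset.mem_Icc] at this
    have hb : IsCode n b := by
      refine ⟨hlow 0 (by omega), h2, fun i => ?_⟩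
      rcases lt_trichotomy i k with h | rfl | h
      · simp [hlow i h]
      · omega
      · rcases Nat.lt_or_ge i n with h' | h'
        · exact (hhigh i h h').2
        · simp [h2 i h']
    refine ⟨unblob n b, ⟨hb.isCayleyTree_unblob, ?_⟩, hb.blob_unblob⟩
    rw [hb.isCayleyTree_unblob.children_iff hk1 hkn, hb.blob_unblob]
    exact ⟨fun i _ hi => hlow i (by omega), hmid,
      fun i hi hi' => (hhigh i (by omega) (by omega)).1⟩

/-- The set of children of the root is exactly `{1,…,k}` iff the
record code lies between `0^{k-1}1^{n-k}` and `0^{k-1}k n^{n-k-1}` lexicographically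
(equivalently: it is `0` at positions `≤ k-1`, between `1` and `k` at position `k`,
and `≥ 1` at positions `≥ k+1`); consequently there are `k·n^{n-k-1}` such trees. -/
theorem stmt4 (n k : ℕ) (hn : 2 ≤ n) (hk1 : 1 ≤ k) (hkn : k ≤ n - 1) :
    (∀ f : ℕ → ℕ, IsCayleyTree n f →
      ((∀ i, 1 ≤ i → i ≤ n → (f i = 0 ↔ i ≤ k)) ↔
        ((∀ i, 1 ≤ i → i ≤ k - 1 → blob n f i = 0) ∧
          (1 ≤ blob n f k ∧ blob n f k ≤ k) ∧
          (∀ i, k + 1 ≤ i → i ≤ n - 1 → 1 ≤ blob n f i)))) ∧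
    Set.ncard {f : ℕ → ℕ | IsCayleyTree n f ∧
        ∀ i, 1 ≤ i → i ≤ n → (f i = 0 ↔ i ≤ k)} = k * n ^ (n - k - 1) := by
  exact ⟨fun f hf => hf.children_iff hk1 hkn, ncard_trees hk1 hkn⟩

end WearyParking
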